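/- For every integer r ≥ 4, the complex group algebras ℂ[SL₂(ℤ/2^rℤ)] and ℂ[SL₂(𝔽₂[t]/(t^r))] are not isomorphic as ℂ-algebras. -/

import Mathlib

namespace SLAux

theorem eig_aux {P : Type} [Group P] [Finite P] (hP : IsPGroup 2 P) (n : ℕ) :
    ∀ (W : Type) [AddCommGroup W] [Module ℂ W] [FiniteDimensional ℂ W]
      (ρ : P →* Module.End ℂ W), Module.finrank ℂ W = n → Odd n →
      ∃ v : W, v ≠ 0 ∧ ∀ p, ∃ c : ℂ, ρ p v = c • v := by
  induction n using Nat.strong_induction_on with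
  | _ n ih =>
  intro W _ _ _ ρ hn hodd
  have hnt : Nontrivial W := by
    apply Module.nontrivial_of_finrank_pos (R := ℂ)
    rw [hn]; exact hodd.pos
  by_cases H : ∃ U : Submodule ℂ W, (∀ p, ∀ w ∈ U, ρ p w ∈ U) ∧ Odd (Module.finrank ℂ U) ∧ U ≠ ⊤
  · obtain ⟨U, hU, hUo, hUt⟩ := H
    have hlt : Module.finrank ℂ U < n := by
      rw [← hn]; exact Submodule.finrank_lt hUt
    let σ : P →* Module.End ℂ U :=
      { toFun := fun p => (ρ p).restrict (hU p)
        map_one' := by ext w; simp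
        map_mul' := fun p q => by ext w; simp }
    obtain ⟨v, hv, hc⟩ := ih _ hlt U σ rfl hUo
    refine ⟨v, by simpa using hv, fun p => ?_⟩
    obtain ⟨c, hc⟩ := hc p
    exact ⟨c, by simpa [σ] using congrArg Subtype.val hc⟩
  · push Not at H
    let S : Subgroup P :=
      { carrier := {p | ∃ c : ℂ, ρ p = c • 1}
        one_mem' := ⟨1, by simp⟩
        mul_mem' := by
          rintro a b ⟨c, hc⟩ ⟨d, hd⟩
          exact ⟨c * d, by rw [map_mul, hc, hd, smul_mul_smul_comm, one_mul]⟩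
        inv_mem' := by
          rintro a ⟨c, hc⟩
          have h1 : ρ a * ρ a⁻¹ = 1 := by rw [← map_mul, mul_inv_cancel, map_one]
          rw [hc, smul_one_mul] at h1
          have hc0 : c ≠ 0 := by
            rintro rfl
            rw [zero_smul] at h1
            exact zero_ne_one h1
          refine ⟨c⁻¹, ?_⟩
          rw [← h1, smul_smul, inv_mul_cancel₀ hc0, one_smul] }
    have hSmem : ∀ p, p ∈ S ↔ ∃ c : ℂ, ρ p = c • 1 := fun p => Iff.rfl
    have hSn : S.Normal := ⟨by
      rintro a ⟨c, hc⟩ g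
      refine ⟨c, ?_⟩
      rw [map_mul, map_mul, hc, mul_smul_comm, mul_one, smul_mul_assoc, ← map_mul, mul_inv_cancel,
        map_one]⟩
    have hcomm : ∀ g h, g * h * g⁻¹ * h⁻¹ ∈ S → ρ g * ρ h = ρ h * ρ g := by
      rintro g h ⟨s, hs⟩
      have hd : s ^ n = 1 := by
        have h1 := congrArg LinearMap.det hs
        rw [LinearMap.det_smul, hn, map_one, mul_one] at h1
        rw [← h1]
        have e1 : LinearMap.det (ρ g) * LinearMap.det (ρ g⁻¹) = 1 := by
          rw [← map_mul, ← map_mul, mul_inv_cancel, map_one, map_one]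
        have e2 : LinearMap.det (ρ h) * LinearMap.det (ρ h⁻¹) = 1 := by
          rw [← map_mul, ← map_mul, mul_inv_cancel, map_one, map_one]
        simp only [map_mul]
        linear_combination e1 * LinearMap.det (ρ h) * LinearMap.det (ρ h⁻¹) + e2
      obtain ⟨k, hk⟩ := hP (g * h * g⁻¹ * h⁻¹)
      have hk2 : s ^ 2 ^ k = 1 := by
        have h1 := congrArg ρ hk
        rw [map_pow, hs, smul_pow, one_pow, map_one] at h1
        obtain ⟨w, hw⟩ := exists_ne (0 : W)
        have h2 := congrArg (fun f : Module.End ℂ W => f w) h1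
        simp only [LinearMap.smul_apply, Module.End.one_apply] at h2
        have h3 : (s ^ 2 ^ k - 1) • w = 0 := by rw [sub_smul, h2, one_smul, sub_self]
        rcases smul_eq_zero.1 h3 with h | h
        · exact sub_eq_zero.1 h
        · exact absurd h hw
      have hs1 : s = 1 := by
        have h1 := orderOf_dvd_of_pow_eq_one hd
        have h2 := orderOf_dvd_of_pow_eq_one hk2
        have hco : Nat.Coprime n (2 ^ k) :=
          Nat.Coprime.pow_right _ (Nat.coprime_two_right.2 hodd)
        have := Nat.dvd_gcd h1 h2
        rw [hco.gcd_eq_one] at this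
        exact orderOf_eq_one_iff.1 (Nat.dvd_one.1 this)
      rw [hs1, one_smul] at hs
      have e : g * h = (g * h * g⁻¹ * h⁻¹) * (h * g) := by group
      rw [← map_mul, ← map_mul, e, map_mul, hs, one_mul]
    have hST : S = ⊤ := by
      by_contra hne
      have hQ : Nontrivial (P ⧸ S) := QuotientGroup.nontrivial_iff.2 hne
      have hQp : IsPGroup 2 (P ⧸ S) := hP.to_quotient S
      have hcn := hQp.center_nontrivial
      have hcp : IsPGroup 2 (Subgroup.center (P ⧸ S)) := hQp.to_subgroup _
      obtain ⟨m, hm0, hm⟩ := (hcp.nontrivial_iff_card).1 hcn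
      obtain ⟨z, hz⟩ := exists_prime_orderOf_dvd_card' (G := Subgroup.center (P ⧸ S)) 2
        (by rw [hm]; exact dvd_pow_self 2 hm0.ne')
      obtain ⟨g, hg⟩ := QuotientGroup.mk_surjective z.1
      have hgS : g ∉ S := by
        intro h
        rw [(QuotientGroup.eq_one_iff g).2 h] at hg
        have : z = 1 := Subtype.ext hg.symm
        rw [this, orderOf_one] at hz
        omega
      have hg2 : g ^ 2 ∈ S := by
        rw [← QuotientGroup.eq_one_iff, QuotientGroup.mk_pow, hg]
        have := pow_orderOf_eq_one z
        rw [hz] at this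
        exact_mod_cast congrArg Subtype.val this
      have hgc : ∀ h, ρ g * ρ h = ρ h * ρ g := by
        intro h
        apply hcomm
        rw [← QuotientGroup.eq_one_iff]
        have := Subgroup.mem_center_iff.1 z.2 (h : P ⧸ S)
        simp only [QuotientGroup.mk_mul, QuotientGroup.mk_inv, hg]
        rw [← this]; group
      obtain ⟨s, hs⟩ := hg2
      obtain ⟨c, hc⟩ := IsAlgClosed.exists_pow_nat_eq s (n := 2) (by norm_num)
      have hs0 : s ≠ 0 := by
        rintro rfl
        rw [zero_smul] at hs
        have : ρ (g ^ 2) * ρ (g ^ 2)⁻¹ = 1 := by rw [← map_mul, mul_inv_cancel, map_one]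
        rw [hs, zero_mul] at this
        exact zero_ne_one this
      have hc0 : c ≠ 0 := by rintro rfl; apply hs0; rw [← hc]; norm_num
      rw [map_pow, ← hc, pow_two] at hs
      have hs' : ∀ w, ρ g (ρ g w) = (c ^ 2) • w := fun w => by
        have := congrArg (fun f : Module.End ℂ W => f w) hs
        simpa using this
      have hdim := LinearMap.finrank_range_add_finrank_ker (ρ g - c • 1)
      have hr : LinearMap.range (ρ g - c • 1) = LinearMap.ker (ρ g + c • 1) := by
        ext w
        simp only [LinearMap.mem_range, LinearMap.mem_ker, LinearMap.sub_apply, LinearMap.add_apply,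
          LinearMap.smul_apply, Module.End.one_apply]
        constructor
        · rintro ⟨y, rfl⟩
          rw [map_sub, hs', map_smul]
          module
        · intro h
          have h' : ρ g w = - (c • w) := eq_neg_of_add_eq_zero_left h
          refine ⟨(-(1 / (2 * c))) • w, ?_⟩
          rw [map_smul, h', smul_neg, smul_smul, smul_smul, ← neg_smul, ← sub_smul]
          have : -(-(1 / (2 * c)) * c) - c * -(1 / (2 * c)) = 1 := by field_simp; norm_num
          rw [this, one_smul]
      rw [hr, hn] at hdim
      have key : ∀ d : ℂ, Odd (Module.finrank ℂ (LinearMap.ker (ρ g + d • 1))) → False := by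
        intro d hd
        have := H _ (by
          intro p w hw
          simp only [LinearMap.mem_ker, LinearMap.add_apply,
            LinearMap.smul_apply, Module.End.one_apply] at hw ⊢
          have h1 : ρ g (ρ p w) = ρ p (ρ g w) := by
            have := congrArg (fun f : Module.End ℂ W => f w) (hgc p)
            simpa using this
          rw [h1, ← map_smul, ← map_add, hw, map_zero]) hd
        apply hgS
        refine ⟨-d, ?_⟩
        rw [LinearMap.ker_eq_top] at this
        rw [neg_smul]
        exact eq_neg_of_add_eq_zero_left this
      rcases Nat.even_or_odd (Module.finrank ℂ (LinearMap.ker (ρ g + c • 1))) with h | h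
      · apply key (-c)
        rw [neg_smul, ← sub_eq_add_neg]
        rw [← hdim] at hodd
        exact (Nat.odd_add'.1 hodd).2 h
      · exact key c h
    obtain ⟨v, hv⟩ := exists_ne (0 : W)
    refine ⟨v, hv, fun p => ?_⟩
    have : p ∈ S := by rw [hST]; trivial
    obtain ⟨c, hc⟩ := this
    exact ⟨c, by rw [hc]; simp⟩

open Classical in
theorem trace_formula {G : Type} [Group G] (P : Subgroup G) (g : Fin 3 → G)
    (hg : ∀ x, ∃! j, (g j)⁻¹ * x ∈ P)
    (ρ : MonoidAlgebra ℂ G →ₐ[ℂ] Matrix (Fin 3) (Fin 3) ℂ) (hρ : Function.Surjective ρ)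
    (v : Fin 3 → ℂ) (hv : v ≠ 0) (χ : P → ℂ)
    (hχ : ∀ p : P, (ρ (MonoidAlgebra.of ℂ G p)).mulVec v = χ p • v) (x : G) :
    (ρ (MonoidAlgebra.of ℂ G x)).trace =
      ∑ i, if h : (g i)⁻¹ * x * g i ∈ P then χ ⟨_, h⟩ else 0 := by
  let B : Matrix (Fin 3) (Fin 3) ℂ :=
    Matrix.of fun k i => (ρ (MonoidAlgebra.of ℂ G (g i))).mulVec v k
  let M : Matrix (Fin 3) (Fin 3) ℂ :=
    Matrix.of fun i j => if h : (g i)⁻¹ * x * g j ∈ P then χ ⟨_, h⟩ else 0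
  have hmove : ∀ y j (h : (g j)⁻¹ * y ∈ P), (ρ (MonoidAlgebra.of ℂ G y)).mulVec v =
      χ ⟨_, h⟩ • (ρ (MonoidAlgebra.of ℂ G (g j))).mulVec v := by
    intro y j h
    have e : y = g j * ((g j)⁻¹ * y) := by group
    conv_lhs => rw [e, map_mul, map_mul, ← Matrix.mulVec_mulVec]
    have := hχ ⟨_, h⟩
    simp only at this
    rw [this, Matrix.mulVec_smul]
  have hB : IsUnit B := by
    rw [← Matrix.mulVec_surjective_iff_isUnit]
    have hall : ∀ a : MonoidAlgebra ℂ G, ∃ w, B.mulVec w = (ρ a).mulVec v := by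
      intro a
      induction a using MonoidAlgebra.induction_on with
      | of y =>
        obtain ⟨j, hj, -⟩ := hg y
        refine ⟨Pi.single j (χ ⟨_, hj⟩), ?_⟩
        rw [hmove y j hj]
        ext k
        simp [B, mul_comm]
      | add a b ha hb =>
        obtain ⟨w, hw⟩ := ha
        obtain ⟨w', hw'⟩ := hb
        exact ⟨w + w', by rw [Matrix.mulVec_add, hw, hw', map_add, Matrix.add_mulVec]⟩
      | smul c a ha =>
        obtain ⟨w, hw⟩ := ha
        exact ⟨c • w, by rw [Matrix.mulVec_smul, hw, map_smul, Matrix.smul_mulVec]⟩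
    intro w
    obtain ⟨k, hk⟩ := Function.ne_iff.1 hv
    simp only [Pi.zero_apply] at hk
    obtain ⟨a, ha⟩ := hρ (Matrix.of fun i j => if j = k then w i / v k else 0)
    obtain ⟨z, hz⟩ := hall a
    refine ⟨z, ?_⟩
    rw [hz, ha]
    ext i
    simp [Matrix.mulVec, dotProduct, hk]
  have hBM : ρ (MonoidAlgebra.of ℂ G x) * B = B * M := by
    ext k j
    obtain ⟨i, hi, hu⟩ := hg (x * g j)
    have e1 : (ρ (MonoidAlgebra.of ℂ G x) * B) k j =
        (ρ (MonoidAlgebra.of ℂ G (x * g j))).mulVec v k := by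
      rw [map_mul, map_mul, ← Matrix.mulVec_mulVec]
      simp [Matrix.mul_apply, B, Matrix.mulVec, dotProduct]
    rw [e1, hmove _ i hi, Matrix.mul_apply, Finset.sum_eq_single i]
    · have hi' : (g i)⁻¹ * x * g j ∈ P := by rw [mul_assoc]; exact hi
      have hM : M i j = χ ⟨_, hi⟩ := by
        simp only [M, Matrix.of_apply, dif_pos hi']
        congr 1
        exact Subtype.ext (mul_assoc _ _ _)
      rw [hM, Pi.smul_apply, smul_eq_mul, mul_comm]
      rfl
    · intro b _ hb
      have : ¬ ((g b)⁻¹ * x * g j ∈ P) := fun h => hb (hu b (by simpa only [mul_assoc] using h))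
      simp only [M, Matrix.of_apply, dif_neg this, mul_zero]
    · simp
  have hdet := (Matrix.isUnit_iff_isUnit_det B).1 hB
  have : ρ (MonoidAlgebra.of ℂ G x) = B * M * B⁻¹ := by
    rw [← hBM, mul_assoc, Matrix.mul_nonsing_inv _ hdet, mul_one]
  rw [this, Matrix.trace_mul_cycle, Matrix.nonsing_inv_mul _ hdet, one_mul]
  rfl

/-- upper bound data: a surjection yields a character of `P`. -/
theorem exists_char {G : Type} [Group G] (P : Subgroup G) [Finite P] (hP : IsPGroup 2 P)
    (ρ : MonoidAlgebra ℂ G →ₐ[ℂ] Matrix (Fin 3) (Fin 3) ℂ) :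
    ∃ (v : Fin 3 → ℂ) (χ : P →* ℂ), v ≠ 0 ∧
      ∀ p : P, (ρ (MonoidAlgebra.of ℂ G p)).mulVec v = χ p • v := by
  let σ : P →* Module.End ℂ (Fin 3 → ℂ) :=
    { toFun := fun p => Matrix.toLin' (ρ (MonoidAlgebra.of ℂ G p))
      map_one' := by
        rw [Subgroup.coe_one, map_one, map_one, Matrix.toLin'_one]; rfl
      map_mul' := fun p q => by
        rw [Subgroup.coe_mul, map_mul, map_mul, Matrix.toLin'_mul]; rfl }
  obtain ⟨v, hv, h⟩ := eig_aux hP 3 (Fin 3 → ℂ) σ (by simp) (by decide)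
  choose c hc using h
  have inj : ∀ a b : ℂ, a • v = b • v → a = b := fun a b h => smul_left_injective ℂ hv h
  refine ⟨v, ⟨⟨c, ?_⟩, ?_⟩, hv, fun p => ?_⟩
  · apply inj
    rw [← hc]; simp
  · intro a b
    apply inj
    rw [← hc, map_mul, Module.End.mul_apply, hc, map_smul, hc, smul_smul, mul_comm]
  · have := hc p
    simpa [σ] using this

end SLAux
namespace SLAux
set_option linter.unusedSimpArgs false
open Matrix

/-- Entries criterion subgroup. -/
def Pp {R : Type} [CommRing R] (π : R →+* ZMod 2) : Subgroup (SpecialLinearGroup (Fin 2) R) where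
  carrier := {g | π (g 1 0) = 0}
  one_mem' := by simp
  mul_mem' := by
    intro a b ha hb
    simp only [Set.mem_ofPred_eq] at *
    simp [Matrix.mul_apply, Fin.sum_univ_two, ha, hb]
  inv_mem' := by
    intro a ha
    simp only [Set.mem_ofPred_eq] at *
    simp [SpecialLinearGroup.coe_inv, adjugate_fin_two, ha]

theorem mem_Pp {R : Type} [CommRing R] (π : R →+* ZMod 2) (g : SpecialLinearGroup (Fin 2) R) :
    g ∈ Pp π ↔ π (g 1 0) = 0 := Iff.rfl

def mk2 {R : Type} [CommRing R] (a b c d : R) (h : a * d - b * c = 1) :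
    SpecialLinearGroup (Fin 2) R := ⟨!![a, b; c, d], by rwa [det_fin_two_of]⟩

section entries
variable {R : Type} [CommRing R]
theorem mk00 (a b c d : R) (h) : (mk2 a b c d h) 0 0 = a := rfl
theorem mk01 (a b c d : R) (h) : (mk2 a b c d h) 0 1 = b := rfl
theorem mk10 (a b c d : R) (h) : (mk2 a b c d h) 1 0 = c := rfl
theorem mk11 (a b c d : R) (h) : (mk2 a b c d h) 1 1 = d := rfl
theorem one00 : (1 : SpecialLinearGroup (Fin 2) R) 0 0 = 1 := by simp
theorem one01 : (1 : SpecialLinearGroup (Fin 2) R) 0 1 = 0 := by simp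
theorem one10 : (1 : SpecialLinearGroup (Fin 2) R) 1 0 = 0 := by simp
theorem one11 : (1 : SpecialLinearGroup (Fin 2) R) 1 1 = 1 := by simp
theorem mulE (x y : SpecialLinearGroup (Fin 2) R) (i j : Fin 2) :
    (x * y) i j = x i 0 * y 0 j + x i 1 * y 1 j := by
  simp [Matrix.mul_apply, Fin.sum_univ_two]
theorem inv00 (x : SpecialLinearGroup (Fin 2) R) : x⁻¹ 0 0 = x 1 1 := by
  simp [SpecialLinearGroup.coe_inv, adjugate_fin_two]
theorem inv01 (x : SpecialLinearGroup (Fin 2) R) : x⁻¹ 0 1 = - x 0 1 := by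
  simp [SpecialLinearGroup.coe_inv, adjugate_fin_two]
theorem inv10 (x : SpecialLinearGroup (Fin 2) R) : x⁻¹ 1 0 = - x 1 0 := by
  simp [SpecialLinearGroup.coe_inv, adjugate_fin_two]
theorem inv11 (x : SpecialLinearGroup (Fin 2) R) : x⁻¹ 1 1 = x 0 0 := by
  simp [SpecialLinearGroup.coe_inv, adjugate_fin_two]
theorem ext4 {x y : SpecialLinearGroup (Fin 2) R} (h0 : x 0 0 = y 0 0) (h1 : x 0 1 = y 0 1)
    (h2 : x 1 0 = y 1 0) (h3 : x 1 1 = y 1 1) : x = y := by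
  ext i j
  fin_cases i <;> fin_cases j
  · exact h0
  · exact h1
  · exact h2
  · exact h3
end entries

def gs (R : Type) [CommRing R] : Fin 3 → SpecialLinearGroup (Fin 2) R :=
  ![1, mk2 0 (-1) 1 0 (by ring), mk2 1 0 1 1 (by ring)]

theorem det_eq {R : Type} [CommRing R] (x : SpecialLinearGroup (Fin 2) R) :
    x 0 0 * x 1 1 - x 0 1 * x 1 0 = 1 := by
  have := x.2
  rwa [det_fin_two] at this

theorem gs_coset {R : Type} [CommRing R] (π : R →+* ZMod 2) (x : SpecialLinearGroup (Fin 2) R) :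
    ∃! j, (gs R j)⁻¹ * x ∈ Pp π := by
  have h0 : (gs R 0)⁻¹ * x ∈ Pp π ↔ π (x 1 0) = 0 := by simp [gs, mem_Pp]
  have h1 : (gs R 1)⁻¹ * x ∈ Pp π ↔ π (x 0 0) = 0 := by
    simp [gs, mem_Pp, mulE, inv00, inv01, inv10, inv11, mk00, mk01, mk10, mk11, one00, one01, one10, one11]
  have h2 : (gs R 2)⁻¹ * x ∈ Pp π ↔ π (x 0 0) = π (x 1 0) := by
    simp [gs, mem_Pp, mulE, inv10, inv11, mk00, mk10]
    generalize π (x 0 0) = a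
    generalize π (x 1 0) = c
    revert a c; decide
  have hd := congrArg π (det_eq x)
  simp only [map_sub, map_mul, map_one] at hd
  generalize π (x 0 0) = a at *
  generalize π (x 1 0) = c at *
  generalize π (x 0 1) = b at *
  generalize π (x 1 1) = d at *
  have key : ∀ a b c d : ZMod 2, a * d - b * c = 1 →
    (c = 0 ∧ ¬ a = 0 ∧ ¬ a = c) ∨ (¬ c = 0 ∧ a = 0 ∧ ¬ a = c) ∨ (¬ c = 0 ∧ ¬ a = 0 ∧ a = c) := by
    decide
  rcases key a b c d hd with ⟨k0, k1, k2⟩ | ⟨k0, k1, k2⟩ | ⟨k0, k1, k2⟩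
  · refine ⟨0, h0.2 k0, fun j hj => ?_⟩
    fin_cases j
    · rfl
    · exact absurd (h1.1 hj) k1
    · exact absurd (h2.1 hj) k2
  · refine ⟨1, h1.2 k1, fun j hj => ?_⟩
    fin_cases j
    · exact absurd (h0.1 hj) k0
    · rfl
    · exact absurd (h2.1 hj) k2
  · refine ⟨2, h2.2 k2, fun j hj => ?_⟩
    fin_cases j
    · exact absurd (h0.1 hj) k0
    · exact absurd (h1.1 hj) k1
    · rfl

section char2
variable {R : Type} [CommRing R] (π : R →+* ZMod 2) (t : R) (r : ℕ)

theorem Pp_pgroup (h2 : (2 : R) = 0) (hnil : ∀ x, π x = 0 → IsNilpotent x) :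
    IsPGroup 2 (Pp π) := by
  rintro ⟨g, hg⟩
  rw [mem_Pp] at hg
  have hd := congrArg π (det_eq g)
  simp only [map_sub, map_mul, map_one, hg, mul_zero, sub_zero] at hd
  have hτ : π (g 0 0 + g 1 1) = 0 := by
    rw [map_add]
    generalize π (g 0 0) = a at *
    generalize π (g 1 1) = b at *
    revert a b; decide
  obtain ⟨n, hn⟩ := hnil _ hτ
  have hsq : (g.1) ^ 2 = 1 + (g 0 0 + g 1 1) • g.1 := by
    have hdet := det_eq g
    ext i j
    fin_cases i <;> fin_cases j <;>
      simp [pow_two, Matrix.mul_apply, Fin.sum_univ_two]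
    · linear_combination (-1 : R) * hdet - h2
    · ring
    · ring
    · linear_combination (-1 : R) * hdet - h2
  refine ⟨n + 1, ?_⟩
  apply Subtype.ext
  apply Subtype.ext
  simp only [SubmonoidClass.coe_pow, SpecialLinearGroup.coe_pow, OneMemClass.coe_one,
    SpecialLinearGroup.coe_one]
  have hnt : Nontrivial R := RingHom.domain_nontrivial π
  have : CharP R 2 := CharTwo.of_one_ne_zero_of_two_eq_zero one_ne_zero h2
  rw [pow_succ', pow_mul]
  change (g.1 ^ 2) ^ 2 ^ n = 1
  rw [hsq, add_pow_char_pow_of_commute _ _ (Commute.one_left _), smul_pow]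
  have : (g 0 0 + g 1 1) ^ 2 ^ n = 0 := by
    obtain ⟨k, hk⟩ := Nat.exists_eq_add_of_le (Nat.lt_two_pow_self (n := n)).le
    rw [hk, pow_add, hn, zero_mul]
  rw [this]; simp

/-- unipotent upper -/
def uu (x : R) : Pp π := ⟨mk2 1 x 0 1 (by ring), by rw [mem_Pp, mk10, map_zero]⟩
/-- unipotent lower -/
def ll (ht : π t = 0) (x : R) : Pp π := ⟨mk2 1 0 (t * x) 1 (by ring), by rw [mem_Pp, mk10, map_mul, ht, zero_mul]⟩
/-- diagonal -/
def hh (a s : R) (h : a * s = 1) : Pp π := ⟨mk2 a 0 0 s (by rw [h]; ring), by rw [mem_Pp, mk10, map_zero]⟩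

theorem Pp_gen (h2 : (2 : R) = 0) (ht : π t = 0) (htn : IsNilpotent t)
    (hker : ∀ x, π x = 0 → ∃ y, x = t * y)
    (E : Subgroup (Pp π)) (hE : ∀ x y, x * y * x⁻¹ * y⁻¹ ∈ E)
    (e1 : uu π 1 ∈ E) (e2 : uu π t ∈ E) (e3 : ll π t ht 1 ∈ E) (e4 : ll π t ht t ∈ E) : E = ⊤ := by
  have hdec : ∀ x : R, ∃ y, x = t * y ∨ x = 1 + t * y := by
    intro x
    have : ∀ a : ZMod 2, a = 0 ∨ a = 1 := by decide
    rcases this (π x) with h | h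
    · obtain ⟨y, hy⟩ := hker x h; exact ⟨y, Or.inl hy⟩
    · obtain ⟨y, hy⟩ := hker (x - 1) (by rw [map_sub, h, map_one, sub_self])
      exact ⟨y, Or.inr (by rw [← hy]; ring)⟩
  have huadd : ∀ x y, uu π (x + y) = uu π x * uu π y := by
    intro x y
    apply Subtype.ext; apply ext4
    all_goals simp only [uu, ll, hh, Subgroup.coe_mul, Subgroup.coe_inv, Subgroup.coe_one, mulE, inv00,
      inv01, inv10, inv11, mk00, mk01, mk10, mk11, one00, one01, one10, one11]
    all_goals ring
  have hladd : ∀ x y, ll π t ht (x + y) = ll π t ht x * ll π t ht y := by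
    intro x y
    apply Subtype.ext; apply ext4
    all_goals simp only [uu, ll, hh, Subgroup.coe_mul, Subgroup.coe_inv, Subgroup.coe_one, mulE, inv00,
      inv01, inv10, inv11, mk00, mk01, mk10, mk11, one00, one01, one10, one11]
    all_goals ring
  obtain ⟨s, hs⟩ := htn.isUnit_one_add.exists_right_inv
  have hu2 : ∀ x, uu π (t ^ 2 * x) ∈ E := by
    intro x
    convert hE (hh π (1 + t) s hs) (uu π x) using 1
    apply Subtype.ext; apply ext4
    all_goals simp only [uu, ll, hh, Subgroup.coe_mul, Subgroup.coe_inv, Subgroup.coe_one, mulE, inv00,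
      inv01, inv10, inv11, mk00, mk01, mk10, mk11, one00, one01, one10, one11]
    all_goals first | ring1 | linear_combination -hs | linear_combination x * hs - t * x * h2
  have hl2 : ∀ x, ll π t ht (t ^ 2 * x) ∈ E := by
    intro x
    have hs' : s * (1 + t) = 1 := by rw [mul_comm]; exact hs
    convert hE (hh π s (1 + t) hs') (ll π t ht x) using 1
    apply Subtype.ext; apply ext4
    all_goals simp only [uu, ll, hh, Subgroup.coe_mul, Subgroup.coe_inv, Subgroup.coe_one, mulE, inv00,
      inv01, inv10, inv11, mk00, mk01, mk10, mk11, one00, one01, one10, one11]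
    all_goals first | ring1 | linear_combination -hs' | linear_combination t * x * hs' - t ^ 2 * x * h2
  have hall : ∀ f : R → Pp π, (∀ x y, f (x + y) = f x * f y) → f 1 ∈ E → f t ∈ E →
      (∀ x, f (t ^ 2 * x) ∈ E) → ∀ x, f x ∈ E := by
    intro f hf f1 ft ft2
    have step : ∀ y, f (t * y) ∈ E := by
      intro y
      obtain ⟨z, hz | hz⟩ := hdec y
      · rw [hz]; convert ft2 z using 2; ring
      · rw [hz]
        have : t * (1 + t * z) = t + t ^ 2 * z := by ring
        rw [this, hf]; exact E.mul_mem ft (ft2 z)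
    intro x
    obtain ⟨y, hy | hy⟩ := hdec x
    · rw [hy]; exact step y
    · rw [hy, hf]; exact E.mul_mem f1 (step y)
  have hu := hall _ huadd e1 e2 hu2
  have hl := hall _ hladd e3 e4 hl2
  have hdecomp : ∀ (p : Pp π) (s c' : R) (hs : p.1 0 0 * s = 1) (hc : p.1 1 0 = t * c'),
      p = ll π t ht (c' * s) * hh π _ s hs * uu π (s * p.1 0 1) := by
    intro p s c' hs hc
    have hd := det_eq p.1
    apply Subtype.ext; apply ext4
    all_goals simp only [uu, ll, hh, Subgroup.coe_mul, mulE, mk00, mk01, mk10, mk11]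
    · ring
    · linear_combination -p.1 0 1 * hs
    · linear_combination hc - t * c' * hs
    · linear_combination s * hd - p.1 1 1 * hs + s * p.1 0 1 * hc - t * c' * s * p.1 0 1 * hs
  rw [eq_top_iff]
  rintro p -
  have hp : π (p.1 1 0) = 0 := p.2
  have hd := congrArg π (det_eq p.1)
  simp only [map_sub, map_mul, map_one, hp, mul_zero, sub_zero] at hd
  have ha : π (p.1 0 0 - 1) = 0 := by
    rw [map_sub, map_one]
    generalize π (p.1 0 0) = a at *
    generalize π (p.1 1 1) = b at *
    revert a b; decide
  obtain ⟨y, hy⟩ := hker _ ha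
  obtain ⟨c', hc'⟩ := hker _ hp
  have hau : IsUnit (p.1 0 0) := by
    have : p.1 0 0 = 1 + t * y := by rw [← hy]; ring
    rw [this]
    exact IsNilpotent.isUnit_one_add ((Commute.all t y).isNilpotent_mul_right htn)
  obtain ⟨s, hs⟩ := hau.exists_right_inv
  have hH : hh π (p.1 0 0) s hs ∈ E := by
    let q : Pp π := uu π 1 * ll π t ht y
    have hq : q ∈ E := E.mul_mem (hu _) (hl _)
    have hq00 : q.1 0 0 = p.1 0 0 := by
      simp only [q, uu, ll, Subgroup.coe_mul, mulE, mk00, mk01, mk10, mk11]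
      linear_combination -hy
    have h3 := hdecomp q s y (by rw [hq00]; exact hs)
      (by simp only [q, uu, ll, Subgroup.coe_mul, mulE, mk00, mk01, mk10, mk11]; ring)
    simp only [hq00] at h3
    rw [h3] at hq
    exact (E.mul_mem_cancel_left (hl _)).1 ((E.mul_mem_cancel_right (hu _)).1 hq)
  rw [hdecomp p s c' hs hc']
  exact E.mul_mem (E.mul_mem (hl _) hH) (hu _)

theorem chars_le (h2 : (2 : R) = 0) (ht : π t = 0) (htn : IsNilpotent t)
    (hker : ∀ x, π x = 0 → ∃ y, x = t * y) :
    ∃ f : (Pp π →* ℂ) → (Fin 4 → Bool), Function.Injective f := by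
  classical
  let e : Fin 4 → Pp π := ![uu π 1, uu π t, ll π t ht 1, ll π t ht t]
  have he : ∀ i, e i * e i = 1 := by
    have hu : ∀ x, uu π x * uu π x = 1 := by
      intro x
      apply Subtype.ext; apply ext4
      all_goals simp only [uu, ll, hh, Subgroup.coe_mul, Subgroup.coe_inv, Subgroup.coe_one, mulE, inv00,
      inv01, inv10, inv11, mk00, mk01, mk10, mk11, one00, one01, one10, one11]
      all_goals first | ring1 | linear_combination x * h2
    have hl : ∀ x, ll π t ht x * ll π t ht x = 1 := by
      intro x
      apply Subtype.ext; apply ext4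
      all_goals simp only [uu, ll, hh, Subgroup.coe_mul, Subgroup.coe_inv, Subgroup.coe_one, mulE, inv00,
      inv01, inv10, inv11, mk00, mk01, mk10, mk11, one00, one01, one10, one11]
      all_goals first | ring1 | linear_combination t * x * h2
    intro i
    fin_cases i <;> simp [e, hu, hl]
  refine ⟨fun χ i => decide (χ (e i) = 1), fun χ χ' h => ?_⟩
  have hval : ∀ i, χ (e i) = χ' (e i) := by
    intro i
    have h1 := congrFun h i
    simp only [decide_eq_decide] at h1
    have hs : ∀ χ : Pp π →* ℂ, χ (e i) = 1 ∨ χ (e i) = -1 := by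
      intro χ
      apply mul_self_eq_one_iff.1
      rw [← map_mul, he, map_one]
    by_cases hc : χ (e i) = 1
    · rw [hc, h1.1 hc]
    · rw [(hs χ).resolve_left hc, (hs χ').resolve_left (fun h => hc (h1.2 h))]
  have hcm : ∀ (χ : Pp π →* ℂ) x y, χ (x * y * x⁻¹ * y⁻¹) = 1 := by
    intro χ x y
    have a1 : χ x * χ x⁻¹ = 1 := by rw [← map_mul, mul_inv_cancel, map_one]
    have a2 : χ y * χ y⁻¹ = 1 := by rw [← map_mul, mul_inv_cancel, map_one]
    simp only [map_mul]
    linear_combination a1 * χ y * χ y⁻¹ + a2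
  have := Pp_gen π t h2 ht htn hker (MonoidHom.eqLocus χ χ')
    (fun x y => by
      change χ _ = χ' _
      rw [hcm, hcm])
    (hval 0) (hval 1) (hval 2) (hval 3)
  ext x
  have hx : x ∈ MonoidHom.eqLocus χ χ' := by rw [this]; trivial
  exact hx

end char2


section induced
open Classical in
/-- The induced representation. -/
noncomputable def indHom {G : Type} [Group G] (P : Subgroup G) (g : Fin 3 → G)
    (hg : ∀ x, ∃! j, (g j)⁻¹ * x ∈ P) (F : G → ℂ) (h1 : F 1 = 1) (h0 : ∀ x, x ∉ P → F x = 0)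
    (hm : ∀ x, ∀ p ∈ P, F (x * p) = F x * F p) : G →* Matrix (Fin 3) (Fin 3) ℂ where
  toFun x := Matrix.of fun i j => F ((g i)⁻¹ * x * g j)
  map_one' := by
    ext i j
    rw [Matrix.of_apply, mul_one]
    by_cases hij : i = j
    · subst hij; simp [h1]
    · rw [Matrix.one_apply_ne hij, h0]
      intro h
      obtain ⟨l, -, hl⟩ := hg (g j)
      exact hij ((hl i h).trans (hl j (by simp [P.one_mem])).symm)
  map_mul' x y := by
    ext i k
    rw [Matrix.mul_apply]
    simp only [Matrix.of_apply]
    obtain ⟨j, hj, hu⟩ := hg (y * g k)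
    rw [Finset.sum_eq_single j]
    · rw [← hm _ _ (by rw [mul_assoc]; exact hj)]
      congr 1
      group
    · intro b _ hb
      rw [h0 ((g b)⁻¹ * y * g k), mul_zero]
      intro h
      exact hb (hu b (by simpa only [mul_assoc] using h))
    · simp

theorem indHom_apply {G : Type} [Group G] (P : Subgroup G) (g : Fin 3 → G)
    (hg : ∀ x, ∃! j, (g j)⁻¹ * x ∈ P) (F : G → ℂ) (h1 : F 1 = 1) (h0 : ∀ x, x ∉ P → F x = 0)
    (hm : ∀ x, ∀ p ∈ P, F (x * p) = F x * F p) (x : G) (i j : Fin 3) :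
    indHom P g hg F h1 h0 hm x i j = F ((g i)⁻¹ * x * g j) := rfl

theorem ind_surj {G H : Type} [Group G] [Group H] (Θ : H →* G) (P : Subgroup G) (g : Fin 3 → G)
    (hg0 : g 0 = 1)
    (hg : ∀ x, ∃! j, (g j)⁻¹ * x ∈ P) (F : G → ℂ) (h1 : F 1 = 1) (h0 : ∀ x, x ∉ P → F x = 0)
    (hm : ∀ x, ∀ p ∈ P, F (x * p) = F x * F p)
    (hΘ : ∀ i, ∃ y, Θ y = g i) (k : H) (x y : ℂ) (hxy : x ≠ y)
    (hk : indHom P g hg F h1 h0 hm (Θ k) = Matrix.diagonal ![x, y, y]) :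
    Function.Surjective (MonoidAlgebra.lift ℂ (Matrix (Fin 3) (Fin 3) ℂ) H
      ((indHom P g hg F h1 h0 hm).comp Θ)) := by
  set ρ := indHom P g hg F h1 h0 hm with hρ
  set φ := MonoidAlgebra.lift ℂ (Matrix (Fin 3) (Fin 3) ℂ) H (ρ.comp Θ) with hφ
  have hof : ∀ z, ρ (Θ z) ∈ φ.range := fun z => ⟨MonoidAlgebra.of ℂ H z, by
    rw [hφ]
    exact MonoidAlgebra.lift_of _ _⟩
  have hE : Matrix.single (0 : Fin 3) (0 : Fin 3) (1 : ℂ) ∈ φ.range := by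
    have e : Matrix.single (0 : Fin 3) (0 : Fin 3) (1 : ℂ) =
        (x - y)⁻¹ • (ρ (Θ k) - y • (1 : Matrix (Fin 3) (Fin 3) ℂ)) := by
      rw [hk]
      have : x - y ≠ 0 := sub_ne_zero.2 hxy
      ext i j
      fin_cases i <;> fin_cases j <;> simp [this]
    rw [e]
    exact φ.range.smul_mem (φ.range.sub_mem (hof k) (φ.range.smul_mem φ.range.one_mem _)) _
  have hd : ∀ i j, F ((g i)⁻¹ * g j) = if i = j then 1 else 0 := by
    intro i j
    split_ifs with h
    · subst h; simp [h1]
    · rw [h0]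
      intro h'
      obtain ⟨l, -, hl⟩ := hg (g j)
      exact h ((hl i h').trans (hl j (by simp [P.one_mem])).symm)
  have hEij : ∀ i j, Matrix.single i j (1 : ℂ) ∈ φ.range := by
    intro i j
    obtain ⟨a, ha⟩ := hΘ i
    obtain ⟨b, hb⟩ := hΘ j
    have e : Matrix.single i j (1 : ℂ) =
        ρ (Θ a) * Matrix.single (0 : Fin 3) (0 : Fin 3) (1 : ℂ) * ρ (Θ b⁻¹) := by
      ext k l
      rw [Matrix.mul_apply, Finset.sum_eq_single 0]
      · rw [Matrix.mul_apply, Finset.sum_eq_single 0]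
        · rw [Matrix.single_apply_same, mul_one, hρ, indHom_apply, indHom_apply, map_inv, ha, hb,
            hg0, mul_one, inv_one, one_mul, hd, hd]
          rw [Matrix.single_apply]
          by_cases h1 : i = k <;> by_cases h2 : j = l <;> simp [h1, h2, eq_comm] 
        · intro c _ hc
          rw [Matrix.single_apply, if_neg (by tauto), mul_zero]
        · simp
      · intro c _ hc
        rw [Matrix.mul_apply, Finset.sum_eq_zero, zero_mul]
        intro d _
        rw [Matrix.single_apply, if_neg (by tauto), mul_zero]
      · simp
    rw [e]
    exact φ.range.mul_mem (φ.range.mul_mem (hof a) hE) (hof _)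
  intro M
  have : M ∈ φ.range := by
    rw [Matrix.matrix_eq_sum_single M]
    refine φ.range.sum_mem fun i _ => φ.range.sum_mem fun j _ => ?_
    have : Matrix.single i j (M i j) = M i j • Matrix.single i j (1 : ℂ) := by simp
    rw [this]
    exact φ.range.smul_mem (hEij i j) _
  exact this
end induced

section sixteen

theorem key4 : ∀ a a' : ZMod 4, a * a = 1 → a' * a' = 1 → ∀ b e b' e' : ZMod 4,
    b * e' * (2 * a * b' + b * (a' * (1 + 2 * b' * e')) + 2 * e * a' + (a * (1 + 2 * b * e)) * e'
      + a * a' + b * e') = 0 := by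
  set_option maxRecDepth 100000 in decide

theorem intA (a b e d a' b' e' d' n n' : ℤ) (h : a * d - b * (2 * e) = 1 + 16 * n)
    (h' : a' * d' - b' * (2 * e') = 1 + 16 * n') (u v : ℤ) (hu : a ^ 2 - 1 = 8 * u)
    (hv : a' ^ 2 - 1 = 8 * v) :
    (16 : ℤ) ∣ (2 * (a * a' + b * (2 * e')) * (a * b' + b * d') +
      (a * a' + b * (2 * e')) * (2 * e * a' + d * (2 * e')) + (a * a' + b * (2 * e')) ^ 2 - 1)
      - (2 * a * b + a * (2 * e) + a ^ 2 - 1) - (2 * a' * b' + a' * (2 * e') + a' ^ 2 - 1) := by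
  have h4 : (4 : ℤ) ∣ b * e' * (2 * a * b' + b * d' + 2 * e * a' + d * e' + a * a' + b * e') := by
    have c8 : (8 : ZMod 4) = 0 := by decide
    have c16 : (16 : ZMod 4) = 0 := by decide
    have g := congrArg (Int.cast : ℤ → ZMod 4) h
    have g' := congrArg (Int.cast : ℤ → ZMod 4) h'
    have gu := congrArg (Int.cast : ℤ → ZMod 4) hu
    have gv := congrArg (Int.cast : ℤ → ZMod 4) hv
    push_cast at g g' gu gv
    rw [c16] at g g'
    rw [c8] at gu gv
    have ga : (a : ZMod 4) * a = 1 := by linear_combination gu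
    have ga' : (a' : ZMod 4) * a' = 1 := by linear_combination gv
    have gd : (d : ZMod 4) = a * (1 + 2 * b * e) := by
      linear_combination (a : ZMod 4) * g - d * ga
    have gd' : (d' : ZMod 4) = a' * (1 + 2 * b' * e') := by
      linear_combination (a' : ZMod 4) * g' - d' * ga'
    rw [show (4 : ℤ) = ((4 : ℕ) : ℤ) from rfl, ← ZMod.intCast_zmod_eq_zero_iff_dvd]
    push_cast
    rw [gd, gd']
    exact key4 _ _ ga ga' _ _ _ _
  obtain ⟨w, hw⟩ := h4
  refine ⟨w + (u * a' * b' + a * e * v + 2 * a * b * n' + 2 * n * a' * e' + 4 * u * v), ?_⟩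
  linear_combination 4 * hw + 2 * a' * b' * hu + 2 * a * b * h' + a * (2 * e) * hv +
    a' * (2 * e') * h + (a' ^ 2 - 1) * hu + 8 * u * hv

theorem intC (a b e d a' b' e' d' n n' : ℤ) (h : a * d - b * (2 * e) = 1 + 16 * n)
    (h' : a' * d' - b' * (2 * e') = 1 + 16 * n') (α α' δ v : ℤ) (ha : a = 2 * α + 1)
    (ha' : a' = 2 * α' + 1) (hdd : d = 2 * δ + 1) (hv : a' ^ 2 - 1 = 8 * v) :
    (16 : ℤ) ∣ (2 * (a * a' + b * (2 * e')) * (2 * e * a' + d * (2 * e')) +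
      4 * ((a * a' + b * (2 * e')) - 1))
      - (2 * a * (2 * e) + 4 * (a - 1)) - (2 * a' * (2 * e') + 4 * (a' - 1)) := by
  obtain ⟨w, hw⟩ := Int.even_mul_succ_self e'
  refine ⟨2 * a * e * v + 4 * n * a' * e' + b * e * a' * e' + α * α' + b * (w + δ * e' ^ 2), ?_⟩
  linear_combination 4*a*e*hv + 4*a'*e'*h + 8*b*e'^2*hdd + 8*b*hw + 4*(a'-1)*ha + 8*α*ha'

theorem zA (a b c d a' b' c' d' : ZMod 16) (h : a * d - b * c = 1) (h' : a' * d' - b' * c' = 1)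
    (hc : ZMod.castHom (show 2 ∣ 16 by norm_num) (ZMod 2) c = 0)
    (hc' : ZMod.castHom (show 2 ∣ 16 by norm_num) (ZMod 2) c' = 0) :
    (2 * (a * a' + b * c') * (a * b' + b * d') +
      (a * a' + b * c') * (c * a' + d * c') + (a * a' + b * c') ^ 2 - 1)
      = (2 * a * b + a * c + a ^ 2 - 1) + (2 * a' * b' + a' * c' + a' ^ 2 - 1) ∧
    (2 * (a * a' + b * c') * (c * a' + d * c') + 4 * ((a * a' + b * c') - 1))
      = (2 * a * c + 4 * (a - 1)) + (2 * a' * c' + 4 * (a' - 1)) := by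
  obtain ⟨a, rfl⟩ := ZMod.intCast_surjective a
  obtain ⟨b, rfl⟩ := ZMod.intCast_surjective b
  obtain ⟨c, rfl⟩ := ZMod.intCast_surjective c
  obtain ⟨d, rfl⟩ := ZMod.intCast_surjective d
  obtain ⟨a', rfl⟩ := ZMod.intCast_surjective a'
  obtain ⟨b', rfl⟩ := ZMod.intCast_surjective b'
  obtain ⟨c', rfl⟩ := ZMod.intCast_surjective c'
  obtain ⟨d', rfl⟩ := ZMod.intCast_surjective d'
  rw [map_intCast] at hc hc'
  have hc2 := (ZMod.intCast_zmod_eq_zero_iff_dvd c 2).1 hc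
  have hc2' := (ZMod.intCast_zmod_eq_zero_iff_dvd c' 2).1 hc'
  obtain ⟨e, he⟩ := hc2
  obtain ⟨e', he'⟩ := hc2'
  have he : c = 2 * e := he
  have he' : c' = 2 * e' := he'
  subst he he'
  have conv : ∀ z : ℤ, (z : ZMod 16) = 0 ↔ (16 : ℤ) ∣ z :=
    fun z => ZMod.intCast_zmod_eq_zero_iff_dvd z 16
  have g : (16 : ℤ) ∣ a * d - b * (2 * e) - 1 := by
    rw [← conv]; push_cast at h ⊢; rw [h, sub_self]
  have g' : (16 : ℤ) ∣ a' * d' - b' * (2 * e') - 1 := by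
    rw [← conv]; push_cast at h' ⊢; rw [h', sub_self]
  obtain ⟨n, hn⟩ := g
  obtain ⟨n', hn'⟩ := g'
  have hn : a * d - b * (2 * e) = 1 + 16 * n := by linarith
  have hn' : a' * d' - b' * (2 * e') = 1 + 16 * n' := by linarith
  have hodd : Odd (a * d) := ⟨b * e + 8 * n, by linarith⟩
  have hodd' : Odd (a' * d') := ⟨b' * e' + 8 * n', by linarith⟩
  obtain ⟨α, hα⟩ := (Int.odd_mul.1 hodd).1
  obtain ⟨δ, hδ⟩ := (Int.odd_mul.1 hodd).2
  obtain ⟨α', hα'⟩ := (Int.odd_mul.1 hodd').1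
  have hsq : ∀ x y : ℤ, x = 2 * y + 1 → ∃ u, x ^ 2 - 1 = 8 * u := by
    intro x y hx
    obtain ⟨w, hw⟩ := Int.even_mul_succ_self y
    exact ⟨w, by rw [hx]; linear_combination 4 * hw⟩
  obtain ⟨u, hu⟩ := hsq a α hα
  obtain ⟨v, hv⟩ := hsq a' α' hα'
  constructor
  · have := (conv _).2 (intA a b e d a' b' e' d' n n' hn hn' u v hu hv)
    push_cast at this ⊢
    linear_combination this
  · have := (conv _).2 (intC a b e d a' b' e' d' n n' hn hn' α α' δ v hα hα' hδ hv)
    push_cast at this ⊢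
    linear_combination this

end sixteen
end SLAux

namespace SLAux
open Matrix

section reps

def Ek (k m a b c : ZMod 16) : ZMod 16 :=
  k * (2 * a * b + a * c + a ^ 2 - 1) + m * (2 * a * c + 4 * (a - 1))

def pi16 : ZMod 16 →+* ZMod 2 := ZMod.castHom (show 2 ∣ 16 by norm_num) (ZMod 2)

noncomputable def Gk (k m a b c : ZMod 16) : ℂ :=
  if pi16 c = 0 then ZMod.stdAddChar (Ek k m a b c) else 0

noncomputable def Fk (k m : ZMod 16) (x : SpecialLinearGroup (Fin 2) (ZMod 16)) : ℂ :=
  Gk k m (x 0 0) (x 0 1) (x 1 0)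

theorem Fk_one (k m : ZMod 16) : Fk k m 1 = 1 := by
  rw [Fk, one00, one01, one10, Gk, if_pos (map_zero _)]
  have : Ek k m 1 0 0 = 0 := by simp only [Ek]; ring
  rw [this, AddChar.map_zero_eq_one]

theorem Fk_zero (k m : ZMod 16) (x) (h : x ∉ Pp pi16) : Fk k m x = 0 := by
  rw [Fk, Gk, if_neg]
  exact h

theorem Fk_mul (k m : ZMod 16) (x) (p) (hp : p ∈ Pp pi16) :
    Fk k m (x * p) = Fk k m x * Fk k m p := by
  by_cases hx : x ∈ Pp pi16
  · have hxp := (Pp pi16).mul_mem hx hp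
    rw [mem_Pp] at hx hp hxp
    have := zA _ _ _ _ _ _ _ _ (det_eq x) (det_eq p) hx hp
    rw [Fk, Fk, Fk, Gk, Gk, Gk, if_pos hx, if_pos hp, if_pos hxp, ← AddChar.map_add_eq_mul]
    congr 1
    rw [mulE, mulE, mulE, Ek, Ek, Ek]
    linear_combination k * this.1 + m * this.2
  · rw [Fk_zero _ _ _ hx, Fk_zero, zero_mul]
    intro h
    exact hx (((Pp pi16).mul_mem_cancel_right hp).1 h)

noncomputable def rep (k m : ZMod 16) :
    SpecialLinearGroup (Fin 2) (ZMod 16) →* Matrix (Fin 3) (Fin 3) ℂ :=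
  indHom (Pp pi16) (gs (ZMod 16)) (gs_coset pi16) (Fk k m) (Fk_one k m) (Fk_zero k m) (Fk_mul k m)

theorem rep_apply (k m x i j) :
    rep k m x i j = Fk k m ((gs (ZMod 16) i)⁻¹ * x * gs (ZMod 16) j) := rfl

theorem gs0 (R : Type) [CommRing R] : gs R 0 = 1 := rfl
theorem gs1 (R : Type) [CommRing R] : gs R 1 = mk2 0 (-1) 1 0 (by ring) := rfl
theorem gs2 (R : Type) [CommRing R] : gs R 2 = mk2 1 0 1 1 (by ring) := rfl

def U2 (R : Type) [CommRing R] : SpecialLinearGroup (Fin 2) R := mk2 1 2 0 1 (by ring)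
def TT (R : Type) [CommRing R] : SpecialLinearGroup (Fin 2) R := mk2 1 1 0 1 (by ring)
def TL (R : Type) [CommRing R] : SpecialLinearGroup (Fin 2) R := mk2 3 1 2 1 (by ring)

theorem Gk_zero (k m a b c) (h : pi16 c ≠ 0) : Gk k m a b c = 0 := if_neg h
theorem Gk_eq (k m a b c p q) (h : pi16 c = 0) (hp : 2 * a * b + a * c + a ^ 2 - 1 = p)
    (hq : 2 * a * c + 4 * (a - 1) = q) :
    Gk k m a b c = ZMod.stdAddChar (k * p + m * q) := by
  rw [Gk, if_pos h, Ek, hp, hq]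

theorem rep_U2 (k m : ZMod 16) : rep k m (U2 (ZMod 16)) =
    Matrix.diagonal ![ZMod.stdAddChar (k * 4 + m * 0), ZMod.stdAddChar (k * (-2) + m * (-4)),
      ZMod.stdAddChar (k * (-2) + m * (-4))] := by
  ext i j
  rw [rep_apply]
  fin_cases i <;> fin_cases j <;>
  simp only [Fin.zero_eta, Fin.mk_one, Fin.reduceFinMk, gs0, gs1, gs2, U2, Fk, mulE, inv00, inv01, inv10, inv11,
    mk00, mk01, mk10, mk11, one00, one01, one10, one11, Matrix.diagonal_apply, Matrix.cons_val,
    reduceIte, Fin.reduceEq] <;>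
  first
  | exact Gk_zero _ _ _ _ _ (by decide)
  | exact Gk_eq _ _ _ _ _ _ _ (by decide) (by decide) (by decide)

theorem rep_TT (k m : ZMod 16) : (rep k m (TT (ZMod 16))).trace =
    ZMod.stdAddChar (k * 2 + m * 0) := by
  rw [Matrix.trace_fin_three, rep_apply, rep_apply, rep_apply]
  simp only [gs0, gs1, gs2, TT, Fk, mulE, inv00, inv01, inv10, inv11,
    mk00, mk01, mk10, mk11, one00, one01, one10, one11]
  rw [Gk_eq _ _ _ _ _ 2 0 (by decide) (by decide) (by decide), Gk_zero _ _ _ _ _ (by decide),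
    Gk_zero _ _ _ _ _ (by decide), add_zero, add_zero]

theorem rep_TL (k m : ZMod 16) : (rep k m (TL (ZMod 16))).trace =
    ZMod.stdAddChar (k * 4 + m * 4) := by
  rw [Matrix.trace_fin_three, rep_apply, rep_apply, rep_apply]
  simp only [gs0, gs1, gs2, TL, Fk, mulE, inv00, inv01, inv10, inv11,
    mk00, mk01, mk10, mk11, one00, one01, one10, one11]
  rw [Gk_eq _ _ _ _ _ 4 4 (by decide) (by decide) (by decide), Gk_zero _ _ _ _ _ (by decide),
    Gk_zero _ _ _ _ _ (by decide), add_zero, add_zero]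

theorem map_mk2 {R S : Type} [CommRing R] [CommRing S] (f : R →+* S) (a b c d : R)
    (h : a * d - b * c = 1) (h') :
    SpecialLinearGroup.map f (mk2 a b c d h) = mk2 (f a) (f b) (f c) (f d) h' :=
  ext4 rfl rfl rfl rfl

/-- Index set. -/
def goodI : Finset (Fin 8 × Fin 4) :=
  Finset.univ.filter fun p => ((p.1.1 : ZMod 16) * 6 + (p.2.1 : ZMod 16) * 4 ≠ 0)

theorem goodI_card : 17 ≤ goodI.card := by decide

theorem exists_reps (r : ℕ) (hr : 4 ≤ r) :
    ∃ ρ : goodI → (MonoidAlgebra ℂ (SpecialLinearGroup (Fin 2) (ZMod (2 ^ r))) →ₐ[ℂ]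
      Matrix (Fin 3) (Fin 3) ℂ), (∀ i, Function.Surjective (ρ i)) ∧
      ∀ i j, (∀ x, (ρ i x).trace = (ρ j x).trace) → i = j := by
  have hd : 16 ∣ 2 ^ r := by
    have := pow_dvd_pow 2 hr
    simpa using this
  let θ : ZMod (2 ^ r) →+* ZMod 16 := ZMod.castHom hd (ZMod 16)
  let Θ := SpecialLinearGroup.map (n := Fin 2) θ
  have θ2 : θ 2 = 2 := map_ofNat θ 2
  have θ3 : θ 3 = 3 := map_ofNat θ 3
  have hU : Θ (U2 _) = U2 _ := by
    apply ext4 <;> change θ _ = _ <;> simp [θ2, U2, mk00, mk01, mk10, mk11]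
  have hT : Θ (TT _) = TT _ := by
    apply ext4 <;> change θ _ = _ <;> simp [TT, mk00, mk01, mk10, mk11]
  have hL : Θ (TL _) = TL _ := by
    apply ext4 <;> change θ _ = _ <;> simp [θ2, θ3, TL, mk00, mk01, mk10, mk11]
  have hg : ∀ i, Θ (gs _ i) = gs _ i := by
    intro i
    fin_cases i
    · exact map_one _
    · apply ext4 <;> change θ _ = _ <;> simp [gs1, mk00, mk01, mk10, mk11]
    · apply ext4 <;> change θ _ = _ <;> simp [gs2, mk00, mk01, mk10, mk11]
  refine ⟨fun i => MonoidAlgebra.lift ℂ _ _ ((rep (i.1.1.1 : ZMod 16) (i.1.2.1 : ZMod 16)).comp Θ),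
    ?_, ?_⟩
  · rintro ⟨⟨k, m⟩, hi⟩
    refine ind_surj Θ _ _ rfl _ _ _ _ _ (fun i => ⟨_, hg i⟩) (U2 _) _ _ ?_
      ((congrArg _ hU).trans (rep_U2 _ _))
    intro h
    have := ZMod.injective_stdAddChar h
    simp only [goodI, Finset.mem_filter, Finset.mem_univ, true_and] at hi
    apply hi
    linear_combination this
  · rintro ⟨⟨k, m⟩, hi⟩ ⟨⟨k', m'⟩, hi'⟩ h
    have e1 := h (MonoidAlgebra.of ℂ _ (TT _))
    have e2 := h (MonoidAlgebra.of ℂ _ (TL _))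
    rw [MonoidAlgebra.lift_of, MonoidAlgebra.lift_of, MonoidHom.comp_apply, MonoidHom.comp_apply,
      hT, rep_TT, rep_TT] at e1
    rw [MonoidAlgebra.lift_of, MonoidAlgebra.lift_of, MonoidHom.comp_apply, MonoidHom.comp_apply,
      hL, rep_TL, rep_TL] at e2
    have f1 := ZMod.injective_stdAddChar e1
    have f2 := ZMod.injective_stdAddChar e2
    have g1 : k = k' := by
      have dk : ∀ k k' : Fin 8, (k.1 : ZMod 16) * 2 = (k'.1 : ZMod 16) * 2 → k = k' := by decide
      apply dk
      linear_combination f1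
    subst g1
    have g2 : m = m' := by
      have dm : ∀ k k' : Fin 4, (k.1 : ZMod 16) * 4 = (k'.1 : ZMod 16) * 4 → k = k' := by decide
      apply dm
      linear_combination f2
    subst g2
    rfl

end reps

section target
open Polynomial

theorem quot_facts (r : ℕ) (hr : 4 ≤ r) :
    ∃ (π : ((ZMod 2)[X] ⧸ Ideal.span {(X : (ZMod 2)[X]) ^ r}) →+* ZMod 2)
      (t : (ZMod 2)[X] ⧸ Ideal.span {(X : (ZMod 2)[X]) ^ r}),
      π t = 0 ∧ IsNilpotent t ∧ ∀ x, π x = 0 → ∃ y, x = t * y := by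
  refine ⟨Ideal.Quotient.lift _ (Polynomial.evalRingHom 0) ?_, Ideal.Quotient.mk _ X, ?_, ?_, ?_⟩
  · intro a ha
    obtain ⟨b, rfl⟩ := Ideal.mem_span_singleton.1 ha
    simp [show r ≠ 0 by omega]
  · simp
  · refine ⟨r, ?_⟩
    rw [← map_pow, Ideal.Quotient.eq_zero_iff_mem]
    exact Ideal.mem_span_singleton_self _
  · intro x hx
    obtain ⟨p, rfl⟩ := Ideal.Quotient.mk_surjective x
    rw [Ideal.Quotient.lift_mk, coe_evalRingHom, ← coeff_zero_eq_eval_zero] at hx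
    obtain ⟨q, rfl⟩ := X_dvd_iff.2 hx
    exact ⟨Ideal.Quotient.mk _ q, map_mul _ _ _⟩

theorem quot_two (r : ℕ) : (2 : (ZMod 2)[X] ⧸ Ideal.span {(X : (ZMod 2)[X]) ^ r}) = 0 := by
  have h : (2 : ZMod 2) = 0 := by decide
  have := congrArg (algebraMap (ZMod 2) ((ZMod 2)[X] ⧸ Ideal.span {(X : (ZMod 2)[X]) ^ r})) h
  simpa only [map_ofNat, map_zero] using this

theorem quot_finite (r : ℕ) : Finite ((ZMod 2)[X] ⧸ Ideal.span {(X : (ZMod 2)[X]) ^ r}) := by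
  have : Module.Finite (ZMod 2) ((ZMod 2)[X] ⧸ Ideal.span {(X : (ZMod 2)[X]) ^ r}) :=
    (monic_X_pow r).finite_quotient
  exact Module.finite_of_finite (ZMod 2)

end target

theorem main {R : Type} [CommRing R] [Finite R] (π : R →+* ZMod 2) (t : R) (h2 : (2 : R) = 0)
    (ht : π t = 0) (htn : IsNilpotent t) (hker : ∀ x, π x = 0 → ∃ y, x = t * y)
    (r : ℕ) (hr : 4 ≤ r)
    (φ : MonoidAlgebra ℂ (SpecialLinearGroup (Fin 2) (ZMod (2 ^ r))) ≃ₐ[ℂ]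
        MonoidAlgebra ℂ (SpecialLinearGroup (Fin 2) R)) : False := by
  obtain ⟨ρ, hs, hinj⟩ := exists_reps r hr
  obtain ⟨f, hf⟩ := chars_le π t h2 ht htn hker
  have hP : IsPGroup 2 (Pp π) := Pp_pgroup π h2 (by
    intro x hx
    obtain ⟨y, rfl⟩ := hker x hx
    exact (Commute.all t y).isNilpotent_mul_right htn)
  let σ : goodI → (MonoidAlgebra ℂ (SpecialLinearGroup (Fin 2) R) →ₐ[ℂ]
      Matrix (Fin 3) (Fin 3) ℂ) := fun i => (ρ i).comp φ.symm.toAlgHom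
  have hσ : ∀ i, Function.Surjective (σ i) := fun i => (hs i).comp φ.symm.surjective
  choose v χ hv hχ using fun i => exists_char (Pp π) hP (σ i)
  have hinj2 : Function.Injective fun i => f (χ i) := by
    intro i j hij
    have hc : χ i = χ j := hf hij
    apply hinj
    have key : ∀ z, (σ i z).trace = (σ j z).trace := by
      intro z
      induction z using MonoidAlgebra.induction_on with
      | of x =>
        rw [trace_formula (Pp π) (gs R) (gs_coset π) (σ i) (hσ i) (v i) (hv i) (χ i) (hχ i),
          trace_formula (Pp π) (gs R) (gs_coset π) (σ j) (hσ j) (v j) (hv j) (χ j) (hχ j), hc]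
      | add a b ha hb => rw [map_add, map_add, trace_add, trace_add, ha, hb]
      | smul c a ha => rw [map_smul, map_smul, trace_smul, trace_smul, ha]
    intro x
    have := key (φ x)
    simpa [σ] using this
  have := Fintype.card_le_of_injective _ hinj2
  have h16 := goodI_card
  simp at this
  omega

end SLAux

/-- For every `r ≥ 4`, the group algebras `ℂ[SL₂(ℤ/2^rℤ)]` and
`ℂ[SL₂(𝔽₂[t]/(t^r))]` are not isomorphic as `ℂ`-algebras. -/
theorem statement1 (r : ℕ) (hr : 4 ≤ r) :
    ¬ Nonempty
      (MonoidAlgebra ℂ (Matrix.SpecialLinearGroup (Fin 2) (ZMod (2 ^ r))) ≃ₐ[ℂ]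
        MonoidAlgebra ℂ
          (Matrix.SpecialLinearGroup (Fin 2)
            (Polynomial (ZMod 2) ⧸ Ideal.span {(Polynomial.X : Polynomial (ZMod 2)) ^ r}))) := by
  rintro ⟨φ⟩
  obtain ⟨π, t, ht, htn, hker⟩ := SLAux.quot_facts r hr
  have := SLAux.quot_finite r
  exact SLAux.main π t (SLAux.quot_two r) ht htn hker r hr φ
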